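/- The sequence of functions q ↦ |∑_{k=-n}^{n} (-1)^k q^{k(k-1)/2} · C(2n, n+k)|^{1/(2n)} converges to the constant function 2 uniformly on every compact subset of the open unit ball B = {z ∈ ℂ : |z| < 1}. -/

import Mathlib

open scoped Classical

/-- Asymmetric crossing of two chords: `B = {a,b}` with `a < b` starts strictly
before `C = {c,d}` and they interleave: `a < c < b < d`. -/
def CrossAsym (B C : Finset ℕ) : Prop :=
  ∃ a b c d : ℕ, a < c ∧ c < b ∧ b < d ∧ B = {a, b} ∧ C = {c, d}

/-- Two blocks cross: `a < c < b < d` or `c < a < d < b`. -/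
def Crosses (B C : Finset ℕ) : Prop := CrossAsym B C ∨ CrossAsym C B

/-- A pairing on `[2n] = {1, …, 2n}`: a partition of `{1, …, 2n}` into blocks of size 2. -/
def IsPairing (n : ℕ) (π : Finset (Finset ℕ)) : Prop :=
  (∀ B ∈ π, B.card = 2 ∧ B ⊆ Finset.Icc 1 (2 * n)) ∧
  (∀ x ∈ Finset.Icc 1 (2 * n), ∃! B, B ∈ π ∧ x ∈ B)

/-- Number of crossings of a pairing: the number of unordered pairs of blocks that cross
(each crossing unordered pair `{B, C}` satisfies the asymmetric condition exactly once). -/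
noncomputable def crNum (π : Finset (Finset ℕ)) : ℕ :=
  Set.ncard {p : Finset ℕ × Finset ℕ | p.1 ∈ π ∧ p.2 ∈ π ∧ CrossAsym p.1 p.2}

/-- A pairing is parity-reversing if each block consists of one odd and one even number. -/
def ParityReversing (π : Finset (Finset ℕ)) : Prop :=
  ∀ B ∈ π, ∃ a b : ℕ, B = {a, b} ∧ Odd a ∧ Even b

/-- A pairing is connected if its blocks cannot be split into two nonempty families
with no crossing between the families. -/
def ConnectedPairing (π : Finset (Finset ℕ)) : Prop :=
  ¬ ∃ S T : Finset (Finset ℕ), S ∪ T = π ∧ Disjoint S T ∧ S.Nonempty ∧ T.Nonempty ∧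
      ∀ B ∈ S, ∀ C ∈ T, ¬ Crosses B C

/-- `tCount n k`: the number of pairings on `[2n]` with exactly `k` crossings. -/
noncomputable def tCount (n k : ℕ) : ℕ :=
  Set.ncard {π : Finset (Finset ℕ) | IsPairing n π ∧ crNum π = k}

/-- `rCount n k`: the number of parity-reversing pairings on `[2n]` with exactly `k` crossings. -/
noncomputable def rCount (n k : ℕ) : ℕ :=
  Set.ncard {π : Finset (Finset ℕ) | IsPairing n π ∧ ParityReversing π ∧ crNum π = k}

/-- `bCount n k`: the number of connected parity-reversing pairings on `[2n]`
with exactly `k` crossings. -/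
noncomputable def bCount (n k : ℕ) : ℕ :=
  Set.ncard {π : Finset (Finset ℕ) |
    IsPairing n π ∧ ParityReversing π ∧ ConnectedPairing π ∧ crNum π = k}

/-- `bTot n`: the number of connected parity-reversing pairings on `[2n]` (equals 1 for `n = 0`). -/
noncomputable def bTot (n : ℕ) : ℕ :=
  Set.ncard {π : Finset (Finset ℕ) |
    IsPairing n π ∧ ParityReversing π ∧ ConnectedPairing π}

/-- The Touchard alternating sum `∑_{k=-n}^n (-1)^k q^{k(k-1)/2} C(2n, n+k)`. -/
noncomputable def touchardSum (n : ℕ) (q : ℂ) : ℂ :=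
  ∑ k ∈ Finset.Icc (-(n : ℤ)) (n : ℤ),
    (-1 : ℂ) ^ k * q ^ ((k * (k - 1)) / 2).toNat * ((2 * n).choose ((n : ℤ) + k).toNat : ℂ)

/-- `T_n(q) = ∑_k t_{n,k} q^k` as a complex polynomial function
(all crossing numbers of pairings on `[2n]` satisfy `k ≤ n*n`). -/
noncomputable def Tpoly (n : ℕ) (q : ℂ) : ℂ :=
  ∑ k ∈ Finset.range (n * n + 1), (tCount n k : ℂ) * q ^ k

/-- `T_n(q) = ∑_k t_{n,k} q^k` as a real polynomial function. -/
noncomputable def TpolyR (n : ℕ) (q : ℝ) : ℝ :=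
  ∑ k ∈ Finset.range (n * n + 1), (tCount n k : ℝ) * q ^ k

/-- `R_n(q) = ∑_k r_{n,k} q^k` as a real polynomial function. -/
noncomputable def RpolyR (n : ℕ) (q : ℝ) : ℝ :=
  ∑ k ∈ Finset.range (n * n + 1), (rCount n k : ℝ) * q ^ k

/-- Non-crossing partitions of `{1, …, 2n}` all of whose blocks have even size. -/
noncomputable def NCEvenPartitions (n : ℕ) : Finset (Finset (Finset ℕ)) :=
  ((Finset.Icc 1 (2 * n)).powerset.powerset).filter (fun π =>
    (∀ B ∈ π, B.Nonempty ∧ Even B.card) ∧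
    (∀ x ∈ Finset.Icc 1 (2 * n), ∃! B, B ∈ π ∧ x ∈ B) ∧
    ¬ ∃ a b c d : ℕ, a < b ∧ b < c ∧ c < d ∧
        ∃ B ∈ π, ∃ C ∈ π, B ≠ C ∧ a ∈ B ∧ c ∈ B ∧ b ∈ C ∧ d ∈ C)
open Filter Topology

noncomputable def gb (q : ℂ) : ℕ → ℕ → ℂ
  | _, 0 => 1
  | 0, _ + 1 => 0
  | M + 1, k + 1 => gb q M k + q ^ (k + 1) * gb q M (k + 1)

noncomputable def qp (q : ℂ) (n : ℕ) : ℂ := ∏ m ∈ Finset.range n, (1 - q ^ (m + 1))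

lemma qp_succ (q : ℂ) (n : ℕ) : qp q (n + 1) = qp q n * (1 - q ^ (n + 1)) := by
  simp [qp, Finset.prod_range_succ]

lemma gb_zero_right (q : ℂ) (M : ℕ) : gb q M 0 = 1 := by cases M <;> simp [gb]

lemma gb_of_lt (q : ℂ) (M : ℕ) : ∀ k, M < k → gb q M k = 0 := by
  induction M with
  | zero => intro k hk; obtain ⟨k, rfl⟩ : ∃ j, k = j + 1 := ⟨k - 1, by omega⟩; simp [gb]
  | succ M ih =>
    intro k hk; obtain ⟨k, rfl⟩ : ∃ j, k = j + 1 := ⟨k - 1, by omega⟩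
    simp [gb, ih k (by omega), ih (k + 1) (by omega)]

lemma gb_mul (q : ℂ) (M : ℕ) : ∀ a b, a + b = M → gb q M a * (qp q a * qp q b) = qp q M := by
  induction M with
  | zero =>
    intro a b h
    obtain ⟨rfl, rfl⟩ : a = 0 ∧ b = 0 := by omega
    simp [gb, qp]
  | succ M ih =>
    intro a b h
    rcases a with _ | a
    · obtain rfl : b = M + 1 := by omega
      simp [gb, qp]
    · have h1 := ih a b (by omega)
      rcases b with _ | b
      · obtain rfl : a = M := by omega
        have h2 := gb_of_lt q a (a + 1) (by omega)
        simp only [gb, h2, qp_succ, mul_zero, add_zero]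
        linear_combination (1 - q ^ (a + 1)) * h1
      · have h2 := ih (a + 1) b (by omega)
        obtain rfl : M = a + b + 1 := by omega
        simp only [gb, qp_succ] at *
        linear_combination (1 - q ^ (a + 1)) * h1 + q ^ (a + 1) * (1 - q ^ (b + 1)) * h2

lemma qbinom (q : ℂ) (M : ℕ) : ∀ x : ℂ, ∏ m ∈ Finset.range M, (1 - x * q ^ m) =
    ∑ k ∈ Finset.range (M + 1), (-1) ^ k * q ^ (k.choose 2) * gb q M k * x ^ k := by
  induction M with
  | zero => intro x; simp [gb]
  | succ M ih =>
    intro x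
    rw [Finset.prod_range_succ']
    have h := ih (x * q)
    have e : ∏ k ∈ Finset.range M, (1 - x * q ^ (k + 1)) =
      ∏ k ∈ Finset.range M, (1 - x * q * q ^ k) := by
      refine Finset.prod_congr rfl fun k _ => ?_
      ring
    rw [e, h, Finset.sum_range_succ' _ (M + 1)]
    have e2 : ∀ k, (-1 : ℂ) ^ (k + 1) * q ^ ((k + 1).choose 2) * gb q (M + 1) (k + 1) * x ^ (k + 1)
      = - x * ((-1) ^ k * q ^ (k.choose 2) * gb q M k * (x * q) ^ k) +
        (-1) ^ (k + 1) * q ^ ((k + 1).choose 2) * gb q M (k + 1) * (x * q) ^ (k + 1) := by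
      intro k
      have : (k + 1).choose 2 = k + k.choose 2 := by
        rw [Nat.choose_succ_succ' k 1]; simp
      rw [this, gb]
      ring
    simp only [e2]
    rw [Finset.sum_add_distrib, ← Finset.mul_sum]
    have e3 := Finset.sum_range_succ' (fun k => (-1 : ℂ) ^ k * q ^ (k.choose 2) * gb q M k * (x * q) ^ k) (M + 1)
    rw [Finset.sum_range_succ] at e3
    simp only [gb_of_lt q M (M + 1) (by omega)] at e3
    simp only [gb_zero_right] at *
    simp at e3 ⊢
    linear_combination e3

lemma two_choose (k : ℕ) : ((k + 1).choose 2) * 2 = (k + 1) * k := by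
  have := Nat.triangle_succ k
  rw [Nat.choose_two_right]
  simp only [Nat.add_sub_cancel]
  exact Nat.div_mul_cancel (by have := Nat.even_mul_succ_self k; rw [mul_comm]; exact this.two_dvd)

/-- finite Jacobi identity -/
lemma finite_jacobi (q : ℂ) (hq : q ≠ 0) (hqp : ∀ n, qp q n ≠ 0) (N : ℕ) :
    ∑ j ∈ Finset.range (N + 1), (-1) ^ j * (2 * (j : ℂ) + 1) * q ^ ((j + 1).choose 2) *
      gb q (2 * N + 1) (N - j) = qp q N ^ 2 := by
  set x0 : ℂ := (q ^ N)⁻¹ with hx0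
  have hx0q : x0 * q ^ N = 1 := by rw [hx0]; field_simp
  -- derivative of both sides
  let g : ℂ → ℂ := fun x => (∏ m ∈ Finset.range N, (1 - x * q ^ m)) *
    ∏ m ∈ Finset.range N, (1 - x * q ^ (N + 1 + m))
  have hfg : ∀ x : ℂ, ∏ m ∈ Finset.range (2 * N + 1), (1 - x * q ^ m) = (1 - x * q ^ N) * g x := by
    intro x
    rw [show 2 * N + 1 = (N + 1) + N by ring, Finset.prod_range_add, Finset.prod_range_succ]
    simp only [g]; ring
  have hgd : Differentiable ℂ g := by
    simp only [g]; fun_prop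
  have hd1 : HasDerivAt (fun x : ℂ => (1 - x * q ^ N) * g x) (- q ^ N * g x0) x0 := by
    have h1 : HasDerivAt (fun x : ℂ => 1 - x * q ^ N) (- (1 * q ^ N)) x0 :=
      ((hasDerivAt_id x0).mul_const (q ^ N)).const_sub 1
    have := h1.mul (hgd x0).hasDerivAt
    refine this.congr_deriv ?_
    rw [hx0q]; ring
  have hd2 : HasDerivAt (fun x : ℂ => ∑ k ∈ Finset.range (2 * N + 1 + 1),
      (-1) ^ k * q ^ (k.choose 2) * gb q (2 * N + 1) k * x ^ k)
      (∑ k ∈ Finset.range (2 * N + 1 + 1),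
      (-1) ^ k * q ^ (k.choose 2) * gb q (2 * N + 1) k * (k * x0 ^ (k - 1))) x0 := by
    refine HasDerivAt.fun_sum fun k _ => ?_
    exact (hasDerivAt_pow k x0).const_mul _
  have hfun : (fun x : ℂ => (1 - x * q ^ N) * g x) = (fun x : ℂ => ∑ k ∈ Finset.range (2 * N + 1 + 1),
      (-1) ^ k * q ^ (k.choose 2) * gb q (2 * N + 1) k * x ^ k) := by
    funext x; rw [← hfg, qbinom]
  rw [← hfun] at hd2
  have key := hd1.unique hd2
  -- evaluate g
  have hg2 : ∏ m ∈ Finset.range N, (1 - x0 * q ^ (N + 1 + m)) = qp q N := by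
    refine Finset.prod_congr rfl fun m _ => ?_
    linear_combination (- q ^ (m + 1)) * hx0q
  have hg1 : q ^ ((N + 1).choose 2) * ∏ m ∈ Finset.range N, (1 - x0 * q ^ m) = (-1) ^ N * qp q N := by
    rw [← Finset.prod_range_reflect]
    have : q ^ ((N + 1).choose 2) = ∏ m ∈ Finset.range N, q ^ (m + 1) := by
      clear * -
      induction N with
      | zero => simp
      | succ n ih =>
        rw [Finset.prod_range_succ, ← ih, Nat.choose_succ_succ' (n + 1) 1, ← pow_add]
        simp [add_comm]
    rw [this, ← Finset.prod_mul_distrib, qp]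
    have h3 : ((-1 : ℂ)) ^ N = ∏ m ∈ Finset.range N, (-1 : ℂ) := by simp
    rw [h3, ← Finset.prod_mul_distrib]
    refine Finset.prod_congr rfl fun m hm => ?_
    have hm := Finset.mem_range.1 hm
    have : q ^ (m + 1) * q ^ (N - 1 - m) = q ^ N := by
      rw [← pow_add]; congr 1; omega
    linear_combination (-x0) * this - hx0q
  -- the sum
  have hsum : ∑ k ∈ Finset.range (2 * N + 1 + 1), (-1) ^ k * q ^ (k.choose 2) *
      gb q (2 * N + 1) k * (k * x0 ^ k) = - g x0 := by
    have : - g x0 = x0 * (- q ^ N * g x0) := by linear_combination (g x0) * hx0q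
    rw [this, key, Finset.mul_sum]
    refine Finset.sum_congr rfl fun k _ => ?_
    rcases k with _ | k
    · simp
    · simp only [Nat.add_sub_cancel]; ring
  have hsum2 : ∑ k ∈ Finset.range (2 * N + 1 + 1), (-1) ^ N * q ^ ((N + 1).choose 2) * ((-1) ^ k * q ^ (k.choose 2) *
      gb q (2 * N + 1) k * (k * x0 ^ k)) = - qp q N ^ 2 := by
    rw [← Finset.mul_sum, hsum]
    simp only [g, hg2]
    have h1 : ((-1 : ℂ) ^ N) * (-1) ^ N = 1 := by rw [← mul_pow]; simp
    linear_combination (-(-1 : ℂ) ^ N * qp q N) * hg1 - qp q N ^ 2 * h1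
  rw [show 2 * N + 1 + 1 = (N + 1) + (N + 1) by ring, Finset.sum_range_add,
    ← Finset.sum_range_reflect, ← Finset.sum_add_distrib] at hsum2
  rw [← neg_inj, ← hsum2, ← Finset.sum_neg_distrib]
  refine Finset.sum_congr rfl fun j hj => ?_
  have hj : j ≤ N := by have := Finset.mem_range.1 hj; omega
  obtain ⟨r, rfl⟩ := Nat.exists_eq_add_of_le hj
  rw [show j + r + 1 - 1 - j = r by omega, show j + r - j = r by omega]
  have hsymm : gb q (2 * (j + r) + 1) (j + r + 1 + j) = gb q (2 * (j + r) + 1) r := by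
    have h1 := gb_mul q (2 * (j + r) + 1) (j + r + 1 + j) r (by ring)
    have h2 := gb_mul q (2 * (j + r) + 1) r (j + r + 1 + j) (by ring)
    have h3 : qp q r * qp q (j + r + 1 + j) ≠ 0 := mul_ne_zero (hqp _) (hqp _)
    apply mul_right_cancel₀ h3
    rw [h2, ← h1]; ring
  have hT : ∀ k : ℕ, k.choose 2 * 2 + k = k * k := by
    intro k
    rcases k with _ | k
    · simp
    · rw [two_choose]; ring
  have t1 : (j + r + 1).choose 2 + r.choose 2 = (j + r) * r + (j + 1).choose 2 := by
    have a1 := hT (j + r + 1)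
    have a2 := hT r
    have a3 := hT (j + 1)
    nlinarith
  have t2 : (j + r + 1).choose 2 + (j + r + 1 + j).choose 2 =
      (j + r) * (j + r + 1 + j) + (j + 1).choose 2 := by
    have a1 := hT (j + r + 1)
    have a2 := hT (j + r + 1 + j)
    have a3 := hT (j + 1)
    nlinarith
  have p : ∀ k e : ℕ, (j + r + 1).choose 2 + k.choose 2 = (j + r) * k + e →
      q ^ ((j + r + 1).choose 2) * q ^ (k.choose 2) * x0 ^ k = q ^ e := by
    intro k e h
    rw [← pow_add, h, pow_add, pow_mul]
    calc (q ^ (j + r)) ^ k * q ^ e * x0 ^ k = (x0 * q ^ (j + r)) ^ k * q ^ e := by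
          rw [mul_pow]; ring
      _ = _ := by rw [hx0q]; simp
  have p1 := p _ _ t1
  have p2 := p _ _ t2
  have s1 : ((-1 : ℂ) ^ r) * (-1) ^ r = 1 := by rw [← mul_pow]; simp
  have s2 : ((-1 : ℂ) ^ j) * (-1) ^ j = 1 := by rw [← mul_pow]; simp
  rw [hsymm]
  have e1 : (-1 : ℂ) ^ (j + r) * q ^ ((j + r + 1).choose 2) * ((-1) ^ r * q ^ (r.choose 2) *
      gb q (2 * (j + r) + 1) r * (r * x0 ^ r)) =
      (-1) ^ j * q ^ ((j + 1).choose 2) * gb q (2 * (j + r) + 1) r * r := by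
    rw [← p1, pow_add]
    linear_combination ((-1) ^ j * q ^ ((j + r + 1).choose 2) * q ^ (r.choose 2) * x0 ^ r *
      gb q (2 * (j + r) + 1) r * r) * s1
  have e2 : (-1 : ℂ) ^ (j + r) * q ^ ((j + r + 1).choose 2) * ((-1) ^ (j + r + 1 + j) *
      q ^ ((j + r + 1 + j).choose 2) *
      gb q (2 * (j + r) + 1) r * ((j + r + 1 + j : ℕ) * x0 ^ (j + r + 1 + j))) =
      - (-1) ^ j * q ^ ((j + 1).choose 2) * gb q (2 * (j + r) + 1) r * (j + r + 1 + j : ℕ) := by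
    rw [← p2]
    have : (-1 : ℂ) ^ (j + r) * (-1) ^ (j + r + 1 + j) = - (-1) ^ j := by
      rw [show j + r + 1 + j = (j + r) + (1 + j) by ring, pow_add _ (j + r) (1 + j), ← mul_assoc,
        ← mul_pow]
      simp [pow_add]
    linear_combination (q ^ ((j + r + 1).choose 2) * q ^ ((j + r + 1 + j).choose 2) *
      x0 ^ (j + r + 1 + j) * gb q (2 * (j + r) + 1) r * ((j + r + 1 + j : ℕ) : ℂ)) * this
  rw [e1, e2]
  push_cast
  ring

lemma summable_bd (r : ℝ) (h0 : 0 ≤ r) (h1 : r < 1) :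
    Summable fun j : ℕ => (2 * (j : ℝ) + 1) * r ^ j := by
  have hr : ‖r‖ < 1 := by rwa [Real.norm_of_nonneg h0]
  have a := (summable_pow_mul_geometric_of_norm_lt_one 1 hr).mul_left 2
  have b := summable_geometric_of_lt_one h0 h1
  refine (a.add b).congr fun j => ?_
  simp; ring

lemma term_bd (q : ℂ) (r : ℝ) (hq : ‖q‖ ≤ r) (h1 : r < 1) (j : ℕ) :
    ‖q ^ ((j + 1).choose 2)‖ ≤ r ^ j := by
  have h0 : 0 ≤ r := (norm_nonneg q).trans hq
  rw [norm_pow]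
  calc ‖q‖ ^ ((j + 1).choose 2) ≤ r ^ ((j + 1).choose 2) := by gcongr
    _ ≤ r ^ j := by
      apply pow_le_pow_of_le_one h0 h1.le
      have : (j + 1).choose 2 = j + j.choose 2 := by
        rw [Nat.choose_succ_succ' j 1]; simp
      omega

lemma qp_ne_zero (q : ℂ) (hq : ‖q‖ < 1) (n : ℕ) : qp q n ≠ 0 := by
  refine Finset.prod_ne_zero_iff.2 fun m _ h => ?_
  have h2 : q ^ (m + 1) = 1 := by linear_combination -h
  have h3 : ‖q‖ ^ (m + 1) < 1 := pow_lt_one₀ (norm_nonneg _) hq (by omega)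
  rw [← norm_pow, h2] at h3
  simp at h3

lemma qp_tendsto (q : ℂ) (hq : ‖q‖ < 1) : ∃ P : ℂ, P ≠ 0 ∧ Tendsto (qp q) atTop (𝓝 P) := by
  refine ⟨∏' n : ℕ, (1 - q ^ (n + 1)), ?_, (ModularForm.multipliable_one_sub_pow hq).hasProd.tendsto_prod_nat⟩
  have := tprod_one_add_ne_zero_of_summable (f := fun n : ℕ => - q ^ (n + 1)) ?_ ?_
  · simpa [sub_eq_add_neg] using this
  · intro n h
    have h3 : ‖q‖ ^ (n + 1) < 1 := pow_lt_one₀ (norm_nonneg _) hq (by omega)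
    have h2 : q ^ (n + 1) = 1 := by linear_combination -h
    rw [← norm_pow, h2] at h3
    simp at h3
  · have := (summable_geometric_of_lt_one (norm_nonneg q) hq)
    have := (summable_nat_add_iff 1).2 this
    simpa using this

lemma jacobi_ne_zero (q : ℂ) (hq : ‖q‖ < 1) :
    ∑' j : ℕ, (-1) ^ j * q ^ ((j + 1).choose 2) * (2 * (j : ℂ) + 1) ≠ 0 := by
  by_cases hq0 : q = 0
  · subst hq0
    rw [tsum_eq_single 0]
    · simp
    · intro j hj
      have : (j + 1).choose 2 ≠ 0 := (Nat.choose_pos (by omega)).ne'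
      simp [this]
  obtain ⟨P, hP, hlim⟩ := qp_tendsto q hq
  have hne := qp_ne_zero q hq
  obtain ⟨M, hM⟩ := hlim.norm.bddAbove_range
  obtain ⟨M', hM'⟩ := (hlim.inv₀ hP).norm.bddAbove_range
  have hM : ∀ n, ‖qp q n‖ ≤ M := fun n => hM ⟨n, rfl⟩
  have hM' : ∀ n, ‖(qp q n)⁻¹‖ ≤ M' := fun n => hM' ⟨n, rfl⟩
  have hM0 : 0 ≤ M := (norm_nonneg _).trans (hM 0)
  have hM'0 : 0 ≤ M' := (norm_nonneg _).trans (hM' 0)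
  let B : ℕ → ℕ → ℂ := fun N j => if j ≤ N then
    qp q N * qp q (2 * N + 1) * (qp q (N - j))⁻¹ * (qp q (N + 1 + j))⁻¹ else 0
  have hBb : ∀ N j, ‖B N j‖ ≤ M * M * M' * M' := by
    intro N j
    simp only [B]
    split_ifs
    · rw [norm_mul, norm_mul, norm_mul]
      gcongr <;> first | apply hM | apply hM'
    · rw [norm_zero]; positivity
  have hBl : ∀ j, Tendsto (fun N => B N j) atTop (𝓝 1) := by
    intro j
    have a1 : Tendsto (fun N => qp q (2 * N + 1)) atTop (𝓝 P) :=
      hlim.comp (tendsto_atTop_mono (fun N => (by simp only [id]; omega : id N ≤ 2 * N + 1)) tendsto_id)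
    have a2 : Tendsto (fun N => qp q (N - j)) atTop (𝓝 P) := hlim.comp (tendsto_sub_atTop_nat j)
    have a3 : Tendsto (fun N => qp q (N + 1 + j)) atTop (𝓝 P) :=
      hlim.comp (tendsto_atTop_mono (fun N => (by simp only [id]; omega : id N ≤ N + 1 + j)) tendsto_id)
    have := ((hlim.mul a1).mul (a2.inv₀ hP)).mul (a3.inv₀ hP)
    rw [show P * P * P⁻¹ * P⁻¹ = 1 by field_simp] at this
    refine this.congr' ?_
    filter_upwards [eventually_ge_atTop j] with N hN
    simp [B, hN]
  have hT := tendsto_tsum_of_dominated_convergence (𝓕 := atTop)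
    (f := fun (N j : ℕ) => (-1 : ℂ) ^ j * q ^ ((j + 1).choose 2) * (2 * (j : ℂ) + 1) * B N j)
    (g := fun j : ℕ => (-1 : ℂ) ^ j * q ^ ((j + 1).choose 2) * (2 * (j : ℂ) + 1))
    (bound := fun j : ℕ => ((2 * (j : ℝ) + 1) * ‖q‖ ^ j) * (M * M * M' * M'))
    ((summable_bd _ (norm_nonneg q) hq).mul_right _)
    (fun j => by simpa using (hBl j).const_mul ((-1 : ℂ) ^ j * q ^ ((j + 1).choose 2) * (2 * (j : ℂ) + 1)))
    (Eventually.of_forall fun N j => by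
      have h1 := term_bd q ‖q‖ le_rfl hq j
      have h2 : ‖(2 * (j : ℂ) + 1)‖ = 2 * (j : ℝ) + 1 := by
        have : (2 * (j : ℂ) + 1) = ((2 * j + 1 : ℕ) : ℂ) := by push_cast; ring
        rw [this, Complex.norm_natCast]; push_cast; ring
      rw [norm_mul, norm_mul, norm_mul, h2, mul_comm (2 * (j : ℝ) + 1)]
      have h3 := hBb N j
      simp only [norm_pow, norm_neg, norm_one, one_pow, one_mul] at h1 ⊢
      gcongr)
  have hS : ∀ N, ∑' j : ℕ, (-1 : ℂ) ^ j * q ^ ((j + 1).choose 2) * (2 * (j : ℂ) + 1) * B N j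
      = qp q N ^ 3 := by
    intro N
    rw [tsum_eq_sum (s := Finset.range (N + 1))]
    · rw [pow_succ, ← finite_jacobi q hq0 hne N, Finset.sum_mul]
      refine Finset.sum_congr rfl fun j hj => ?_
      have hj : j ≤ N := by have := Finset.mem_range.1 hj; omega
      have h := gb_mul q (2 * N + 1) (N - j) (N + 1 + j) (by omega)
      simp only [B, hj, if_true]
      rw [← h]
      have := hne (N - j)
      have := hne (N + 1 + j)
      field_simp
    · intro j hj
      have hj : ¬ j ≤ N := by intro h; exact hj (Finset.mem_range.2 (by omega))
      simp [B, hj]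
  simp only [hS] at hT
  rw [tendsto_nhds_unique hT (hlim.pow 3)]
  exact pow_ne_zero 3 hP

lemma sum_Icc_split (f : ℤ → ℂ) (n : ℕ) : ∑ k ∈ Finset.Icc (-(n : ℤ)) (n : ℤ), f k =
    ∑ j ∈ Finset.range (n + 1), f (-(j : ℤ)) + ∑ j ∈ Finset.range n, f ((j : ℤ) + 1) := by
  induction n with
  | zero => simp
  | succ n ih =>
    have : Finset.Icc (-((n + 1 : ℕ) : ℤ)) ((n + 1 : ℕ) : ℤ) =
        insert (-((n + 1 : ℕ) : ℤ)) (insert ((n : ℤ) + 1) (Finset.Icc (-(n : ℤ)) (n : ℤ))) := by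
      ext x; simp only [Finset.mem_insert, Finset.mem_Icc]; push_cast; omega
    rw [this, Finset.sum_insert, Finset.sum_insert, ih, Finset.sum_range_succ _ (n + 1),
      Finset.sum_range_succ (fun j : ℕ => f ((j : ℤ) + 1)) n]
    · push_cast; ring
    · simp
    · simp only [Finset.mem_insert, Finset.mem_Icc]; push_cast; omega

lemma touchard_eq (n : ℕ) (q : ℂ) : touchardSum n q = ∑ j ∈ Finset.range (n + 1),
    (-1) ^ j * q ^ ((j + 1).choose 2) *
      (((2 * n).choose (n + j) : ℂ) - ((2 * n).choose (n + j + 1) : ℂ)) := by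
  have hT : ∀ j : ℕ, (((j : ℤ) + 1) * j / 2).toNat = (j + 1).choose 2 := by
    intro j
    have h : (((j : ℤ) + 1) * j) = (((j + 1).choose 2 : ℕ) : ℤ) * 2 := by
      exact_mod_cast (two_choose j).symm
    rw [h, Int.mul_ediv_cancel _ (by norm_num), Int.toNat_natCast]
  have h2 : ∑ j ∈ Finset.range n, (-1 : ℂ) ^ ((j : ℤ) + 1) *
      q ^ ((((j : ℤ) + 1) * ((j : ℤ) + 1 - 1)) / 2).toNat *
        ((2 * n).choose ((n : ℤ) + ((j : ℤ) + 1)).toNat : ℂ) =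
      ∑ j ∈ Finset.range (n + 1), - ((-1 : ℂ) ^ j * q ^ ((j + 1).choose 2) *
        ((2 * n).choose (n + j + 1) : ℂ)) := by
    rw [Finset.sum_range_succ _ n, Nat.choose_eq_zero_of_lt (show 2 * n < n + n + 1 by omega)]
    simp only [Nat.cast_zero, mul_zero, neg_zero, add_zero]
    refine Finset.sum_congr rfl fun j _ => ?_
    have e1 : ((n : ℤ) + ((j : ℤ) + 1)).toNat = n + j + 1 := by omega
    have e2 : (-1 : ℂ) ^ ((j : ℤ) + 1) = (-1) ^ (j + 1) := by
      exact_mod_cast zpow_natCast (-1 : ℂ) (j + 1)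
    rw [e1, e2, show (j : ℤ) + 1 - 1 = j by ring, hT]
    ring
  unfold touchardSum
  rw [sum_Icc_split, h2, ← Finset.sum_add_distrib]
  refine Finset.sum_congr rfl fun j hj => ?_
  have hj : j ≤ n := by have := Finset.mem_range.1 hj; omega
  have e1 : ((n : ℤ) + -(j : ℤ)).toNat = n - j := by omega
  have e2 : (-1 : ℂ) ^ (-(j : ℤ)) = (-1) ^ j := by
    rw [zpow_neg, zpow_natCast, ← inv_pow]; norm_num
  have e3 : (2 * n).choose (n - j) = (2 * n).choose (n + j) :=
    Nat.choose_symm_of_eq_add (by omega)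
  rw [e1, e2, e3, show (-(j : ℤ)) * (-(j : ℤ) - 1) = ((j : ℤ) + 1) * j by ring, hT]
  ring

/-- normalised coefficient -/
noncomputable def cf (n j : ℕ) : ℝ :=
  ((2 * n).choose (n + j) : ℝ) / ((2 * n).choose n : ℝ)

lemma choose_step (n j : ℕ) : ((2 * n).choose (n + j + 1) : ℝ) * ((n : ℝ) + j + 1) =
    ((2 * n).choose (n + j) : ℝ) * ((n : ℝ) - j) := by
  have h := Nat.choose_succ_right_eq (2 * n) (n + j)
  rcases le_or_gt j n with hj | hj
  · obtain ⟨r, rfl⟩ := Nat.exists_eq_add_of_le hj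
    rw [show 2 * (j + r) - (j + r + j) = r by omega] at h
    have h' : ((2 * (j + r)).choose (j + r + j + 1) : ℝ) * (((j + r + j + 1 : ℕ)) : ℝ) =
      ((2 * (j + r)).choose (j + r + j) : ℝ) * r := by exact_mod_cast h
    push_cast at h' ⊢
    linear_combination h'
  · rw [Nat.choose_eq_zero_of_lt (show 2 * n < n + j + 1 by omega),
      Nat.choose_eq_zero_of_lt (show 2 * n < n + j by omega)]
    simp

lemma c0_pos (n : ℕ) : (0 : ℝ) < ((2 * n).choose n : ℝ) := by
  exact_mod_cast Nat.choose_pos (by omega)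

lemma cf_le (n j : ℕ) : cf n j ≤ 1 := by
  unfold cf
  rw [div_le_one (c0_pos n)]
  exact_mod_cast Nat.choose_le_centralBinom (n + j) n

lemma cf_nonneg (n j : ℕ) : 0 ≤ cf n j := by unfold cf; positivity

lemma lim_frac (a b : ℝ) : Tendsto (fun n : ℕ => ((n : ℝ) + a) / ((n : ℝ) + b)) atTop (𝓝 1) := by
  have h : Tendsto (fun n : ℕ => (n : ℝ) + b) atTop atTop :=
    tendsto_atTop_add_const_right _ _ tendsto_natCast_atTop_atTop
  have h1 : Tendsto (fun n : ℕ => 1 + (a - b) / ((n : ℝ) + b)) atTop (𝓝 (1 + 0)) :=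
    (h.const_div_atTop (a - b)).const_add 1
  rw [add_zero] at h1
  refine h1.congr' ?_
  filter_upwards [h.eventually_gt_atTop 0] with n hn
  field_simp
  ring

lemma cf_tendsto (j : ℕ) : Tendsto (fun n => cf n j) atTop (𝓝 1) := by
  induction j with
  | zero =>
    refine tendsto_const_nhds.congr fun n => ?_
    simp only [cf, add_zero]
    exact (div_self (c0_pos n).ne').symm
  | succ j ih =>
    have := ih.mul (lim_frac (-j) (j + 1))
    rw [mul_one] at this
    refine this.congr fun n => ?_
    have h := choose_step n j
    have h0 := (c0_pos n).ne'
    have h1 : (n : ℝ) + (j + 1) ≠ 0 := by positivity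
    simp only [cf, ← add_assoc] at *
    field_simp
    linear_combination -h

/-- coefficient normalised by the Catalan number -/
noncomputable def cg (n j : ℕ) : ℝ :=
  cf n j * (((n : ℝ) + 1) / ((n : ℝ) + (j + 1))) * (2 * (j : ℝ) + 1)

lemma cg_eq (n j : ℕ) : ((2 * n).choose (n + j) : ℝ) - ((2 * n).choose (n + j + 1) : ℝ) =
    ((2 * n).choose n : ℝ) / ((n : ℝ) + 1) * cg n j := by
  have h := choose_step n j
  have h0 := (c0_pos n).ne'
  have h1 : (n : ℝ) + (j + 1) ≠ 0 := by positivity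
  have h2 : (n : ℝ) + 1 ≠ 0 := by positivity
  unfold cg cf
  field_simp
  linear_combination -h

lemma cg_nonneg (n j : ℕ) : 0 ≤ cg n j := by
  have := cf_nonneg n j
  unfold cg; positivity

lemma cg_le (n j : ℕ) : cg n j ≤ 2 * (j : ℝ) + 1 := by
  have h1 := cf_nonneg n j
  have h2 := cf_le n j
  have h3 : ((n : ℝ) + 1) / ((n : ℝ) + (j + 1)) ≤ 1 := by
    rw [div_le_one (by positivity)]
    have : (0 : ℝ) ≤ j := by positivity
    linarith
  have h4 : cf n j * (((n : ℝ) + 1) / ((n : ℝ) + (j + 1))) ≤ 1 := mul_le_one₀ h2 (by positivity) h3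
  unfold cg
  have : (0 : ℝ) ≤ 2 * (j : ℝ) + 1 := by positivity
  nlinarith

lemma cg_tendsto (j : ℕ) : Tendsto (fun n => cg n j) atTop (𝓝 (2 * (j : ℝ) + 1)) := by
  have := ((cf_tendsto j).mul (lim_frac 1 (j + 1))).mul_const (2 * (j : ℝ) + 1)
  simpa [cg] using this

lemma touchard_eq_tsum (n : ℕ) (q : ℂ) : touchardSum n q =
    ((((2 * n).choose n : ℝ) / ((n : ℝ) + 1) : ℝ) : ℂ) *
      ∑' j : ℕ, (-1) ^ j * q ^ ((j + 1).choose 2) * (cg n j : ℂ) := by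
  rw [touchard_eq, tsum_eq_sum (s := Finset.range (n + 1)), Finset.mul_sum]
  · refine Finset.sum_congr rfl fun j _ => ?_
    have h : ((((2 * n).choose (n + j) : ℝ) - ((2 * n).choose (n + j + 1) : ℝ) : ℝ) : ℂ) =
      (((((2 * n).choose n : ℝ) / ((n : ℝ) + 1) * cg n j : ℝ)) : ℂ) := by rw [cg_eq]
    push_cast at h ⊢
    rw [h]; ring
  · intro j hj
    have hj : n < j := by
      by_contra h
      exact hj (Finset.mem_range.2 (by omega))
    have : cg n j = 0 := by
      simp [cg, cf, Nat.choose_eq_zero_of_lt (show 2 * n < n + j by omega)]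
    simp [this]

lemma main_lim (x : ℂ) (hx : ‖x‖ < 1) :
    Tendsto (fun y : ℕ × ℂ => ∑' j : ℕ, (-1) ^ j * y.2 ^ ((j + 1).choose 2) * (cg y.1 j : ℂ))
      (atTop ×ˢ 𝓝 x) (𝓝 (∑' j : ℕ, (-1) ^ j * x ^ ((j + 1).choose 2) * (2 * (j : ℂ) + 1))) := by
  obtain ⟨r, hr, hr1⟩ := exists_between hx
  refine tendsto_tsum_of_dominated_convergence
    (bound := fun j : ℕ => (2 * (j : ℝ) + 1) * r ^ j)
    (summable_bd r ((norm_nonneg x).trans hr.le) hr1) ?_ ?_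
  · intro j
    have h1 : Tendsto (fun y : ℕ × ℂ => (cg y.1 j : ℂ)) (atTop ×ˢ 𝓝 x) (𝓝 (2 * (j : ℂ) + 1)) := by
      have := (Complex.continuous_ofReal.tendsto _).comp ((cg_tendsto j).comp
        (tendsto_fst (f := atTop) (g := 𝓝 x)))
      push_cast at this
      exact this
    have h2 : Tendsto (fun y : ℕ × ℂ => y.2) (atTop ×ˢ 𝓝 x) (𝓝 x) := tendsto_snd
    exact ((h2.pow _).const_mul _).mul h1
  · have h2 : Tendsto (fun y : ℕ × ℂ => ‖y.2‖) (atTop ×ˢ 𝓝 x) (𝓝 ‖x‖) := tendsto_snd.norm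
    filter_upwards [h2.eventually_lt_const hr] with y hy j
    have h1 := term_bd y.2 r hy.le hr1 j
    have h3 : ‖(cg y.1 j : ℂ)‖ ≤ 2 * (j : ℝ) + 1 := by
      rw [Complex.norm_real, Real.norm_of_nonneg (cg_nonneg _ _)]
      exact cg_le _ _
    rw [norm_mul, norm_mul, mul_comm (2 * (j : ℝ) + 1)]
    have h4 : 0 ≤ r := (norm_nonneg x).trans hr.le
    simp only [norm_pow, norm_neg, norm_one, one_pow, one_mul] at h1 ⊢
    gcongr

lemma catalan_root : Tendsto (fun n : ℕ =>
    (((2 * n).choose n : ℝ) / ((n : ℝ) + 1)) ^ ((1 : ℝ) / (2 * (n : ℝ)))) atTop (𝓝 2) := by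
  have hx : Tendsto (fun n : ℕ => 2 * (n : ℝ)) atTop atTop :=
    tendsto_natCast_atTop_atTop.const_mul_atTop (by norm_num)
  have h1 : Tendsto (fun n : ℕ => (2 * (n : ℝ)) ^ ((1 : ℝ) / (2 * (n : ℝ)))) atTop (𝓝 1) :=
    tendsto_rpow_div.comp hx
  have h2 : Tendsto (fun n : ℕ => 2 / ((2 * (n : ℝ)) ^ ((1 : ℝ) / (2 * (n : ℝ)))) ^ 2) atTop
      (𝓝 (2 / 1 ^ 2)) := tendsto_const_nhds.div (h1.pow 2) (by norm_num)
  rw [show (2 : ℝ) / 1 ^ 2 = 2 by norm_num] at h2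
  have e4 : ∀ n : ℕ, 1 ≤ n → ((4 : ℝ) ^ n) ^ ((1 : ℝ) / (2 * (n : ℝ))) = 2 := by
    intro n hn
    have hn' : (n : ℝ) ≠ 0 := by positivity
    rw [show (4 : ℝ) = 2 ^ 2 by norm_num, ← pow_mul, one_div,
      show 2 * (n : ℝ) = ((2 * n : ℕ) : ℝ) by push_cast; ring,
      Real.pow_rpow_inv_natCast (by norm_num) (by omega)]
  refine tendsto_of_tendsto_of_tendsto_of_le_of_le' h2 tendsto_const_nhds ?_ ?_
  · filter_upwards [eventually_ge_atTop 1] with n hn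
    have hn' : (1 : ℝ) ≤ n := by exact_mod_cast hn
    have e5 : 2 / ((2 * (n : ℝ)) ^ ((1 : ℝ) / (2 * (n : ℝ)))) ^ 2 =
        ((4 : ℝ) ^ n / (2 * (n : ℝ)) ^ 2) ^ ((1 : ℝ) / (2 * (n : ℝ))) := by
      rw [Real.div_rpow (by positivity) (by positivity), e4 n hn,
        Real.rpow_pow_comm (by positivity)]
    rw [e5]
    apply Real.rpow_le_rpow (by positivity) _ (by positivity)
    have hb := Nat.four_pow_le_two_mul_self_mul_centralBinom n hn
    have hb' : (4 : ℝ) ^ n ≤ 2 * n * ((2 * n).choose n : ℝ) := by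
      rw [Nat.centralBinom] at hb
      exact_mod_cast hb
    rw [div_le_div_iff₀ (by positivity) (by positivity)]
    have := c0_pos n
    calc (4 : ℝ) ^ n * (n + 1) ≤ (2 * n * ((2 * n).choose n : ℝ)) * (n + n) := by gcongr
      _ = _ := by ring
  · filter_upwards [eventually_ge_atTop 1] with n hn
    refine le_trans ?_ (e4 n hn).le
    apply Real.rpow_le_rpow (by positivity) _ (by positivity)
    have hb : ((2 * n).choose n : ℝ) ≤ 2 ^ (2 * n) := by
      exact_mod_cast Nat.choose_le_two_pow (2 * n) n
    rw [pow_mul] at hb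
    norm_num at hb
    refine (div_le_self (by positivity) ?_).trans hb
    have : (0 : ℝ) ≤ n := by positivity
    linarith

/-- The functions `q ↦ |∑_{k=-n}^n (-1)^k q^{k(k-1)/2} C(2n, n+k)|^{1/(2n)}` converge to the
constant `2` uniformly on every compact subset of the open unit ball of `ℂ`. -/
theorem touchardSum_abs_rpow_tendstoUniformlyOn (K : Set ℂ) (hK : IsCompact K)
    (hKball : K ⊆ Metric.ball (0 : ℂ) 1) :
    TendstoUniformlyOn
      (fun (n : ℕ) (q : ℂ) => ‖touchardSum n q‖ ^ ((1 : ℝ) / (2 * (n : ℝ))))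
      (fun _ => 2) Filter.atTop K := by
  rw [← tendstoLocallyUniformlyOn_iff_tendstoUniformlyOn_of_compact hK,
    tendstoLocallyUniformlyOn_iff_forall_tendsto]
  intro x hx
  have hx1 : ‖x‖ < 1 := by simpa using hKball hx
  rw [← Uniform.tendsto_nhds_right]
  have hle : (Filter.atTop : Filter ℕ) ×ˢ 𝓝[K] x ≤ Filter.atTop ×ˢ 𝓝 x :=
    Filter.prod_mono le_rfl nhdsWithin_le_nhds
  refine Tendsto.mono_left ?_ hle
  have h1 := (main_lim x hx1).norm
  have h0 := norm_ne_zero_iff.2 (jacobi_ne_zero x hx1)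
  have hexp : Tendsto (fun y : ℕ × ℂ => (1 : ℝ) / (2 * (y.1 : ℝ))) (Filter.atTop ×ˢ 𝓝 x) (𝓝 0) := by
    have hx : Tendsto (fun n : ℕ => 2 * (n : ℝ)) atTop atTop :=
      tendsto_natCast_atTop_atTop.const_mul_atTop (by norm_num)
    exact (hx.const_div_atTop 1).comp tendsto_fst
  have h2 := h1.rpow hexp (Or.inl h0)
  rw [Real.rpow_zero] at h2
  have h3 := (catalan_root.comp (tendsto_fst (f := atTop) (g := 𝓝 x))).mul h2
  rw [mul_one] at h3
  refine h3.congr fun y => ?_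
  have hpos : (0 : ℝ) ≤ ((2 * y.1).choose y.1 : ℝ) / ((y.1 : ℝ) + 1) := by positivity
  rw [touchard_eq_tsum, norm_mul, Complex.norm_real, Real.norm_of_nonneg hpos,
    Real.mul_rpow hpos (norm_nonneg _)]
  rfl
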